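/- arXiv:2105.05984 — 2 statements merged into one kernel-verified Lean document; each statement's English description precedes it below -/
import Mathlib

section
/- Let p be a prime, let m be an integer with 1 ≤ m ≤ p, let x, y ∈ {0, …, p−1} be distinct keys, and let a, b ∈ {0, …, m−1}. With h a random linear hash function with parameters p and m, it holds that | Pr( h(x) = a and h(y) = b ) − 1/m² | ≤ 3/(mp). -/
theorem aux_count (p m a : ℕ) (hm : 1 ≤ m) (ha : a < m) :
    |(((Finset.range p).filter fun u => u % m = a).card : ℝ) - (p : ℝ) / m| ≤ 1 := by
  have h := Nat.count_modEq_card_eq_ceil p (r := m) (by omega) a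
  rw [Nat.count_eq_card_filter_range] at h
  have e : ((Finset.range p).filter fun u => u ≡ a [MOD m])
      = (Finset.range p).filter fun u => u % m = a := by
    ext u
    simp [Nat.ModEq, Nat.mod_eq_of_lt ha]
  rw [e, Nat.mod_eq_of_lt ha] at h
  set A := ((Finset.range p).filter fun u => u % m = a).card
  have hmq : (0 : ℚ) < m := by exact_mod_cast hm
  have haq : (a : ℚ) < m := by exact_mod_cast ha
  have h1 := Int.le_ceil (((p : ℚ) - (a : ℕ)) / (m : ℚ))
  have h2 := Int.ceil_lt_add_one (((p : ℚ) - (a : ℕ)) / (m : ℚ))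
  rw [← h, sub_div] at h1 h2
  have h3 : (a : ℚ) / m < 1 := by rw [div_lt_one hmq]; exact haq
  have h4 : (0 : ℚ) ≤ (a : ℚ) / m := by positivity
  have h5 : |((A : ℕ) : ℚ) - (p : ℚ) / m| ≤ 1 := by
    push_cast at h1 h2
    rw [abs_le]; constructor <;> linarith
  have h6 : ((|((A : ℕ) : ℚ) - (p : ℚ) / m| : ℚ) : ℝ) ≤ ((1 : ℚ) : ℝ) := Rat.cast_le.2 h5
  push_cast at h6
  exact h6

theorem aux_inj (p x y : ℕ) (hp : p.Prime) (hx : x < p) (hy : y < p) (hxy : x ≠ y) :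
    Set.InjOn (fun s : ℕ × ℕ => ((s.1 * x + s.2) % p, (s.1 * y + s.2) % p))
      (Finset.range p ×ˢ Finset.range p : Finset (ℕ × ℕ)) := by
  have := Fact.mk hp
  rintro ⟨s, t⟩ h1 ⟨s', t'⟩ h2 h
  simp only [Finset.coe_product, Set.mem_prod, Finset.mem_coe, Finset.mem_range] at h1 h2
  simp only [Prod.mk.injEq] at h
  obtain ⟨e1, e2⟩ := h
  have f1 := (ZMod.natCast_eq_natCast_iff _ _ p).2 e1
  have f2 := (ZMod.natCast_eq_natCast_iff _ _ p).2 e2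
  push_cast at f1 f2
  have cast_inj : ∀ u v : ℕ, u < p → v < p → (u : ZMod p) = v → u = v := by
    intro u v hu hv huv
    have := (ZMod.natCast_eq_natCast_iff _ _ p).1 huv
    exact Nat.ModEq.eq_of_lt_of_lt this hu hv
  have hne : (x : ZMod p) - y ≠ 0 := fun h0 => hxy (cast_inj x y hx hy (sub_eq_zero.1 h0))
  have hs : (s : ZMod p) = s' := by
    apply mul_right_cancel₀ hne
    linear_combination f1 - f2
  have ht : (t : ZMod p) = t' := by
    linear_combination f1 - x * hs
  rw [cast_inj s s' h1.1 h2.1 hs, cast_inj t t' h1.2 h2.2 ht]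

theorem aux_card (p m x y a b : ℕ) (hp : p.Prime) (hx : x < p) (hy : y < p) (hxy : x ≠ y) :
    ((Finset.range p ×ˢ Finset.range p).filter fun στ : ℕ × ℕ =>
          ((στ.1 * x + στ.2) % p) % m = a ∧ ((στ.1 * y + στ.2) % p) % m = b).card
      = ((Finset.range p).filter fun u => u % m = a).card
        * ((Finset.range p).filter fun u => u % m = b).card := by
  have hinj := aux_inj p x y hp hx hy hxy
  have hmaps : Set.MapsTo (fun s : ℕ × ℕ => ((s.1 * x + s.2) % p, (s.1 * y + s.2) % p))
      (Finset.range p ×ˢ Finset.range p : Finset (ℕ × ℕ))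
      (Finset.range p ×ˢ Finset.range p : Finset (ℕ × ℕ)) := by
    intro s _
    simp [Nat.mod_lt _ hp.pos]
  have hsurj := Finset.surjOn_of_injOn_of_card_le _ hmaps hinj le_rfl
  rw [← Finset.card_product, ← Finset.filter_product]
  refine Finset.card_nbij (fun s : ℕ × ℕ => ((s.1 * x + s.2) % p, (s.1 * y + s.2) % p)) ?_ ?_ ?_
  · intro s hs
    rw [Finset.mem_coe, Finset.mem_filter] at hs ⊢
    exact ⟨hmaps hs.1, hs.2⟩
  · exact hinj.mono (by exact_mod_cast Finset.filter_subset _ _)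
  · intro u hu
    rw [Finset.mem_coe, Finset.mem_filter] at hu
    obtain ⟨s, hs, rfl⟩ := hsurj hu.1
    exact ⟨s, Finset.mem_coe.2 (Finset.mem_filter.2 ⟨hs, hu.2⟩), rfl⟩

/-- Pairwise independence of linear hashing. For a prime `p`, `1 ≤ m ≤ p`,
distinct keys `x y ∈ [p]` and buckets `a, b ∈ [m]`, with `h(x) = ((σx + τ) mod p) mod m` for
`σ, τ` uniform in `[p]`, we have `|Pr(h(x) = a ∧ h(y) = b) − 1/m²| ≤ 3/(mp)`. -/
theorem stmt_3 (p m : ℕ) (hp : p.Prime) (hm : 1 ≤ m) (hmp : m ≤ p)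
    (x y : ℕ) (hx : x < p) (hy : y < p) (hxy : x ≠ y)
    (a b : ℕ) (ha : a < m) (hb : b < m) :
    abs (((((Finset.range p ×ˢ Finset.range p).filter fun στ =>
          ((στ.1 * x + στ.2) % p) % m = a ∧ ((στ.1 * y + στ.2) % p) % m = b).card : ℝ)
        / (p : ℝ) ^ 2) - 1 / (m : ℝ) ^ 2) ≤ 3 / ((m : ℝ) * p) := by
  rw [aux_card p m x y a b hp hx hy hxy]
  have hA := aux_count p m a hm ha
  have hB := aux_count p m b hm hb
  push_cast
  generalize (((Finset.range p).filter fun u => u % m = a).card : ℝ) = A at *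
  generalize (((Finset.range p).filter fun u => u % m = b).card : ℝ) = B at *
  have hm0 : (0 : ℝ) < m := by exact_mod_cast hm
  have hp0 : (0 : ℝ) < p := by exact_mod_cast hp.pos
  have hq : (1 : ℝ) ≤ (p : ℝ) / m := by
    rw [le_div_iff₀ hm0, one_mul]; exact_mod_cast hmp
  have key : |A * B - ((p : ℝ) / m) ^ 2| ≤ 3 * ((p : ℝ) / m) := by
    generalize (p : ℝ) / m = q at *
    have e : A * B - q ^ 2 = q * (A - q) + q * (B - q) + (A - q) * (B - q) := by ring
    have hAB : |(A - q) * (B - q)| ≤ 1 := by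
      rw [abs_mul]; exact mul_le_one₀ hA (abs_nonneg _) hB
    rw [e]
    rw [abs_le] at *
    constructor <;> nlinarith
  have e1 : A * B / (p : ℝ) ^ 2 - 1 / (m : ℝ) ^ 2
      = (A * B - ((p : ℝ) / m) ^ 2) / (p : ℝ) ^ 2 := by field_simp
  have e2 : 3 / ((m : ℝ) * p) = (3 * ((p : ℝ) / m)) / (p : ℝ) ^ 2 := by field_simp
  rw [e1, e2, abs_div, abs_of_pos (by positivity : (0 : ℝ) < (p : ℝ) ^ 2)]
  gcongr
end

section
/- There is a universal constant C such that the following holds. Let U ≥ 2, let X ⊆ {0, …, U−1} be a set of k ≥ 1 keys, let p be a prime with p > 4U², let m be an integer with 1 ≤ m ≤ U, let h be a random linear hash function with parameters p and m, fix a key x ∈ {0, …, U−1} with x ∉ X and buckets a, b ∈ {0, …, m−1}, and let F = #{ y ∈ X : h(y) = b } (a random variable over the choice of h). Then | E(F) − k/m | ≤ C and | E(F | h(x) = a) − k/m | ≤ C, and for every λ > 0, Pr( |F − E(F)| ≥ λ·√(E(F)) | h(x) = a ) ≤ C · U · log₂(U) / (λ² · k). -/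
/-- The number of keys of `X` hashed to bucket `b` by `v ↦ ((σv + τ) mod p) mod m`. -/
def bucketLoad (p m b : ℕ) (X : Finset ℕ) (στ : ℕ × ℕ) : ℕ :=
  (X.filter fun y => ((στ.1 * y + στ.2) % p) % m = b).card

/-- The expectation of the bucket load `F` over the uniform choice of `(σ, τ) ∈ [p]²`. -/
noncomputable def expLoad (p m b : ℕ) (X : Finset ℕ) : ℝ :=
  (∑ στ ∈ Finset.range p ×ˢ Finset.range p, (bucketLoad p m b X στ : ℝ)) / (p : ℝ) ^ 2

/-- The pairs `(σ, τ) ∈ [p]²` for which `h(x) = a`. -/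
def condEvent (p m x a : ℕ) : Finset (ℕ × ℕ) :=
  (Finset.range p ×ˢ Finset.range p).filter fun στ => ((στ.1 * x + στ.2) % p) % m = a


noncomputable def Mcnt (p : ℕ) (e1 e2 : ℤ) (J1 J2 : ℕ) (r : ZMod p) : ℝ :=
  ∑ i ∈ Finset.range J1, ∑ j ∈ Finset.range J2,
    if ((e1 : ZMod p) * (i : ZMod p) + (e2 : ZMod p) * (j : ZMod p) = r) then (1 : ℝ) else 0

noncomputable def Ncnt (p : ℕ) (e1 e2 e3 : ℤ) (J1 J2 J3 : ℕ) (r : ZMod p) : ℝ :=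
  ∑ i ∈ Finset.range J1, ∑ j ∈ Finset.range J2, ∑ k ∈ Finset.range J3,
    if ((e1 : ZMod p) * (i : ZMod p) + (e2 : ZMod p) * (j : ZMod p) + (e3 : ZMod p) * (k : ZMod p) = r)
      then (1 : ℝ) else 0

theorem Mcnt_swap (p : ℕ) (e1 e2 : ℤ) (J1 J2 : ℕ) (r : ZMod p) :
    Mcnt p e1 e2 J1 J2 r = Mcnt p e2 e1 J2 J1 r := by
  unfold Mcnt
  rw [Finset.sum_comm]
  simp only [add_comm]

theorem Ncnt_swap12 (p : ℕ) (e1 e2 e3 : ℤ) (J1 J2 J3 : ℕ) (r : ZMod p) :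
    Ncnt p e1 e2 e3 J1 J2 J3 r = Ncnt p e2 e1 e3 J2 J1 J3 r := by
  unfold Ncnt
  rw [Finset.sum_comm]
  refine Finset.sum_congr rfl fun i _ => Finset.sum_congr rfl fun j _ =>
    Finset.sum_congr rfl fun k _ => ?_
  rw [add_comm ((e1 : ZMod p) * _)]

theorem Ncnt_swap23 (p : ℕ) (e1 e2 e3 : ℤ) (J1 J2 J3 : ℕ) (r : ZMod p) :
    Ncnt p e1 e2 e3 J1 J2 J3 r = Ncnt p e1 e3 e2 J1 J3 J2 r := by
  unfold Ncnt
  refine Finset.sum_congr rfl fun i _ => ?_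
  rw [Finset.sum_comm]
  refine Finset.sum_congr rfl fun i _ => Finset.sum_congr rfl fun j _ => ?_
  rw [add_right_comm]

theorem fiber_bound (e1 e2 s : ℤ) (J1 J2 : ℕ) (h1 : e1 ≠ 0) (hc : IsCoprime e1 e2) :
    ((Finset.range J1 ×ˢ Finset.range J2).filter
      fun t : ℕ × ℕ => e1 * t.1 + e2 * t.2 = s).card ≤ J2 / e1.natAbs + 1 := by
  set S := (Finset.range J1 ×ˢ Finset.range J2).filter
      fun t : ℕ × ℕ => e1 * t.1 + e2 * t.2 = s with hS
  have : S.card ≤ (Finset.range (J2 / e1.natAbs + 1)).card := by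
    apply Finset.card_le_card_of_injOn (fun t => t.2 / e1.natAbs)
    · intro t ht
      simp only [hS, Finset.coe_filter, Finset.mem_product, Finset.mem_range, Set.mem_ofPred_eq] at ht
      simp only [Finset.coe_range, Set.mem_Iio]
      exact Nat.lt_succ_of_le (Nat.div_le_div_right ht.1.2.le)
    · intro t ht t' ht' h
      simp only [hS, Finset.coe_filter, Finset.mem_product, Finset.mem_range, Set.mem_ofPred_eq] at ht ht'
      simp only at h
      have hd : e1 ∣ e2 * ((t.2 : ℤ) - t'.2) := ⟨t'.1 - t.1, by linarith [ht.2, ht'.2]⟩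
      have hd2 : e1 ∣ ((t.2 : ℤ) - t'.2) := hc.dvd_of_dvd_mul_left hd
      have hm : t'.2 ≡ t.2 [MOD e1.natAbs] := by
        rw [Nat.modEq_iff_dvd]
        exact Int.natAbs_dvd.mpr hd2
      have h2 : t.2 = t'.2 := by
        rw [← Nat.div_add_mod t.2 e1.natAbs, ← Nat.div_add_mod t'.2 e1.natAbs, h, hm]
      have h3 : e1 * (t.1 : ℤ) = e1 * t'.1 := by
        have := ht.2; have := ht'.2; rw [h2] at *; linarith
      have h4 := mul_left_cancel₀ h1 h3
      ext
      · exact_mod_cast h4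
      · exact h2
  simpa using this

theorem ap_bound (p : ℕ) (K : ℕ) (r : ZMod p) :
    ((Finset.Icc (-(K : ℤ)) K).filter fun s : ℤ => (s : ZMod p) = r).card ≤ 2 * K / p + 1 := by
  set S := (Finset.Icc (-(K : ℤ)) K).filter fun s : ℤ => (s : ZMod p) = r with hS
  have : S.card ≤ (Finset.range (2 * K / p + 1)).card := by
    apply Finset.card_le_card_of_injOn (fun s : ℤ => (s + (K : ℤ)).toNat / p)
    · intro t ht
      simp only [hS, Finset.coe_filter, Finset.mem_Icc, Set.mem_ofPred_eq] at ht
      simp only [Finset.coe_range, Set.mem_Iio]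
      exact Nat.lt_succ_of_le (Nat.div_le_div_right (by omega))
    · intro t ht t' ht' h
      simp only [hS, Finset.coe_filter, Finset.mem_Icc, Set.mem_ofPred_eq] at ht ht'
      simp only at h
      have h1 : (t : ZMod p) = t' := ht.2.trans ht'.2.symm
      rw [ZMod.intCast_eq_intCast_iff] at h1
      have h2 : (t + K).toNat ≡ (t' + K).toNat [MOD p] := by
        rw [← Int.natCast_modEq_iff, Int.toNat_of_nonneg (by omega), Int.toNat_of_nonneg (by omega)]
        exact h1.add_right _
      have h3 : (t + K).toNat = (t' + K).toNat := by
        rw [← Nat.div_add_mod (t + K).toNat p, ← Nat.div_add_mod (t' + K).toNat p, h, h2]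
      omega
  simpa using this

theorem M_bound (p : ℕ) (hp : 0 < p) (e1 e2 : ℤ) (D J J1 J2 : ℕ) (hD : 1 ≤ D)
    (h1 : D ≤ 2 * e1.natAbs) (h1' : e1.natAbs ≤ D) (h2 : e2.natAbs ≤ D) (hc : IsCoprime e1 e2)
    (hJ1 : J1 ≤ J) (hJ2 : J2 ≤ J) (hDJ : D ≤ J) (r : ZMod p) :
    Mcnt p e1 e2 J1 J2 r ≤ 12 * (J : ℝ) ^ 2 / p + 3 * J / D := by
  set S := (Finset.range J1 ×ˢ Finset.range J2).filter
      fun t : ℕ × ℕ => (e1 : ZMod p) * (t.1 : ZMod p) + (e2 : ZMod p) * (t.2 : ZMod p) = r with hS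
  have hM : Mcnt p e1 e2 J1 J2 r = S.card := by
    unfold Mcnt
    rw [← Finset.sum_product', hS, Finset.card_filter]
    push_cast
    rfl
  have hcard : S.card ≤ (J2 / e1.natAbs + 1) * (2 * (2 * D * J) / p + 1) := by
    have := Finset.card_le_mul_card_image (f := fun t : ℕ × ℕ => e1 * (t.1 : ℤ) + e2 * t.2) S
      (J2 / e1.natAbs + 1) (by
        intro s _
        refine le_trans (Finset.card_le_card ?_) (fiber_bound e1 e2 s J1 J2 (by omega) hc)
        intro t ht
        simp only [hS, Finset.mem_filter] at ht ⊢
        exact ⟨ht.1.1, ht.2⟩)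
    refine this.trans (Nat.mul_le_mul_left _ (le_trans (Finset.card_le_card ?_)
      (ap_bound p (2 * D * J) r)))
    intro s hs
    rw [Finset.mem_image] at hs
    obtain ⟨t, ht, rfl⟩ := hs
    simp only [hS, Finset.mem_filter, Finset.mem_product, Finset.mem_range] at ht
    rw [Finset.mem_filter]
    constructor
    · have a1 : |e1 * (t.1 : ℤ)| ≤ D * J := by
        rw [abs_mul]
        apply mul_le_mul <;> first | positivity | skip
        · rw [Int.abs_eq_natAbs]; omega
        · rw [Nat.abs_cast]; omega
      have a2 : |e2 * (t.2 : ℤ)| ≤ D * J := by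
        rw [abs_mul]
        apply mul_le_mul <;> first | positivity | skip
        · rw [Int.abs_eq_natAbs]; omega
        · rw [Nat.abs_cast]; omega
      rw [abs_le] at a1 a2
      rw [Finset.mem_Icc]
      push_cast
      constructor <;> linarith
    · push_cast
      exact ht.2
  rw [hM]
  have he : (0:ℝ) < (e1.natAbs : ℝ) := by
    have : 0 < e1.natAbs := by omega
    exact_mod_cast this
  have hD0 : (0:ℝ) < D := by exact_mod_cast hD
  have hp0 : (0:ℝ) < p := by exact_mod_cast hp
  have b1 : (((J2 / e1.natAbs + 1 : ℕ)) : ℝ) ≤ 3 * J / D := by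
    push_cast
    have c1 : ((J2 / e1.natAbs : ℕ) : ℝ) ≤ 2 * J / D := by
      refine (Nat.cast_div_le).trans ?_
      rw [div_le_div_iff₀ he hD0]
      have : J2 * D ≤ J * (2 * e1.natAbs) := Nat.mul_le_mul hJ2 h1
      have : (J2 : ℝ) * D ≤ J * (2 * e1.natAbs) := by exact_mod_cast this
      linarith
    have c2 : (1:ℝ) ≤ J / D := by
      rw [le_div_iff₀ hD0]; simpa using (by exact_mod_cast hDJ : (D:ℝ) ≤ J)
    have : (3:ℝ) * J / D = 2 * J / D + J / D := by ring
    linarith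
  have b2 : (((2 * (2 * D * J) / p + 1 : ℕ)) : ℝ) ≤ 4 * D * J / p + 1 := by
    push_cast
    have := @Nat.cast_div_le ℝ _ _ _ (2 * (2 * D * J)) p
    push_cast at this
    have e : (2 * (2 * (D:ℝ) * J)) / p = 4 * D * J / p := by ring
    linarith
  calc (S.card : ℝ) ≤ (((J2 / e1.natAbs + 1) * (2 * (2 * D * J) / p + 1) : ℕ) : ℝ) := by
        exact_mod_cast hcard
    _ ≤ (3 * J / D) * (4 * D * J / p + 1) := by
        rw [Nat.cast_mul]
        exact mul_le_mul b1 b2 (by positivity) (by positivity)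
    _ = _ := by field_simp; ring

theorem M_nonneg (p : ℕ) (e1 e2 : ℤ) (J1 J2 : ℕ) (r : ZMod p) : 0 ≤ Mcnt p e1 e2 J1 J2 r := by
  unfold Mcnt
  refine Finset.sum_nonneg fun i _ => Finset.sum_nonneg fun j _ => ?_
  split_ifs <;> norm_num

theorem N_step (p : ℕ) (e1 e2 e3 : ℤ) (J1 J2 J3 : ℕ) (G : ℝ)
    (hG : ∀ r, Mcnt p e1 e2 J1 J2 r ≤ G) (r : ZMod p) :
    |Ncnt p e1 e2 e3 J1 J2 J3 (r + e3) - Ncnt p e1 e2 e3 J1 J2 J3 r| ≤ G := by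
  have key : Ncnt p e1 e2 e3 J1 J2 J3 (r + e3) - Ncnt p e1 e2 e3 J1 J2 J3 r
      = Mcnt p e1 e2 J1 J2 (r + e3) - Mcnt p e1 e2 J1 J2 (r + e3 - e3 * J3) := by
    unfold Ncnt Mcnt
    rw [← Finset.sum_sub_distrib, ← Finset.sum_sub_distrib]
    refine Finset.sum_congr rfl fun i _ => ?_
    rw [← Finset.sum_sub_distrib, ← Finset.sum_sub_distrib]
    refine Finset.sum_congr rfl fun j _ => ?_
    set A : ZMod p := (e1 : ZMod p) * (i : ZMod p) + (e2 : ZMod p) * (j : ZMod p)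
    have h := Finset.sum_range_sub
      (fun k : ℕ => if A + (e3 : ZMod p) * (k : ZMod p) = r + e3 then (1:ℝ) else 0) J3
    rw [Finset.sum_sub_distrib] at h
    have e : ∀ k : ℕ, (A + (e3 : ZMod p) * ((k + 1 : ℕ) : ZMod p) = r + e3) ↔
        (A + (e3 : ZMod p) * (k : ZMod p) = r) := by
      intro k
      push_cast
      rw [mul_add, mul_one, ← add_assoc, add_left_inj]
    have e' : (A + (e3 : ZMod p) * (J3 : ZMod p) = r + e3) ↔ A = r + e3 - e3 * J3 := by
      rw [eq_sub_iff_add_eq]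
    simp only [e, e'] at h
    simp only [Nat.cast_zero, mul_zero, add_zero] at h
    linarith
  rw [key, abs_le]
  have := M_nonneg p e1 e2 J1 J2 (r + e3)
  have := M_nonneg p e1 e2 J1 J2 (r + e3 - e3 * J3)
  have := hG (r + e3)
  have := hG (r + e3 - e3 * J3)
  constructor <;> linarith

theorem steps {R : Type*} [CommRing R] (f : R → ℝ) (e : R) (G : ℝ) (h : ∀ r, |f (r + e) - f r| ≤ G) (n : ℤ) (r : R) :
    |f (r + n * e) - f r| ≤ n.natAbs * G := by
  have nat : ∀ (n : ℕ) (r : R), |f (r + n * e) - f r| ≤ n * G := by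
    intro n
    induction n with
    | zero => intro r; simp
    | succ k ih =>
      intro r
      have h1 := ih r
      have h2 := h (r + k * e)
      have : r + ((k + 1 : ℕ) : R) * e = r + k * e + e := by push_cast; ring
      rw [this]
      have := abs_sub_le (f (r + k * e + e)) (f (r + k * e)) (f r)
      push_cast
      linarith
  rcases Int.natAbs_eq n with hn | hn
  · have := nat n.natAbs r
    rw [hn]; simpa using this
  · have := nat n.natAbs (r + n * e)
    rw [abs_sub_comm] at this
    have e2 : r + (n : R) * e + (n.natAbs : R) * e = r := by
      have : (n : R) = -(n.natAbs : R) := by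
        conv_lhs => rw [hn]
        rw [Int.cast_neg, Int.cast_natCast]
      rw [this]; ring
    rw [e2] at this
    rw [abs_sub_comm, abs_sub_comm]
    exact this

theorem N_bound (p : ℕ) (hp : p.Prime) (e1 e2 e3 : ℤ) (D J J1 J2 J3 m : ℕ) (hD : 1 ≤ D)
    (h1 : D ≤ 2 * e1.natAbs) (h1' : e1.natAbs ≤ D) (h2 : e2.natAbs ≤ D) (h3 : e3.natAbs = D)
    (hc12 : IsCoprime e1 e2) (hc13 : IsCoprime e1 e3) (hc23 : IsCoprime e2 e3)
    (hJ1 : J1 ≤ J) (hJ2 : J2 ≤ J) (hJ3 : J3 ≤ J) (hDJ : D ≤ J)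
    (hDp : 4 * D ^ 2 ≤ p) (hm : 1 ≤ m) (hJm : p ≤ m * J) (hJm' : m * J ≤ 2 * p) (r : ZMod p) :
    Ncnt p e1 e2 e3 J1 J2 J3 r ≤ (J1 : ℝ) * J2 * J3 / p + 36 * (J : ℝ) ^ 2 / D := by
  have : Fact p.Prime := ⟨hp⟩
  have hp0 : (0:ℝ) < p := by exact_mod_cast hp.pos
  have hD0 : (0:ℝ) < D := by exact_mod_cast hD
  have hm0 : (0:ℝ) < m := by exact_mod_cast hm
  have rJm : (p:ℝ) ≤ m * J := by exact_mod_cast hJm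
  have rJm' : (m:ℝ) * J ≤ 2 * p := by exact_mod_cast hJm'
  have rDp : 4 * (D:ℝ)^2 ≤ p := by exact_mod_cast hDp
  have hJ0 : (0:ℝ) ≤ J := by positivity
  set G : ℝ := 12 * (J : ℝ) ^ 2 / p + 3 * J / D with hGdef
  have G12 : ∀ r, Mcnt p e1 e2 J1 J2 r ≤ G := fun r =>
    M_bound p hp.pos e1 e2 D J J1 J2 hD h1 h1' h2 hc12 hJ1 hJ2 hDJ r
  have G23 : ∀ r, Mcnt p e2 e3 J2 J3 r ≤ G := fun r => by
    rw [Mcnt_swap]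
    exact M_bound p hp.pos e3 e2 D J J3 J2 hD (by omega) (by omega) h2 hc23.symm hJ3 hJ2 hDJ r
  rcases le_total m D with hmD | hmD
  · have rmD : (m:ℝ) ≤ D := by exact_mod_cast hmD
    set f := Ncnt p e1 e2 e3 J1 J2 J3 with hf
    have s3 : ∀ r, |f (r + e3) - f r| ≤ G := fun r => N_step p e1 e2 e3 J1 J2 J3 G G12 r
    have s1 : ∀ r, |f (r + e1) - f r| ≤ G := fun r => by
      have := N_step p e2 e3 e1 J2 J3 J1 G G23 r
      have e : ∀ r, Ncnt p e2 e3 e1 J2 J3 J1 r = f r := fun r => by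
        rw [Ncnt_swap23, Ncnt_swap12]
      rwa [e, e] at this
    have hG0 : 0 ≤ G := le_trans (abs_nonneg _) (s3 0)
    have diff : ∀ r', |f r' - f r| ≤ 2 * p / D * G := by
      intro r'
      -- write r' - r = w
      obtain ⟨l, i, hl, hi, hli⟩ : ∃ l i : ℤ, l.natAbs ≤ D ∧ i.natAbs * D ≤ p + D * D ∧
          l * e1 + i * e3 = (((r' - r).val : ℕ) : ℤ) := by
        set w : ℤ := (((r' - r).val : ℕ) : ℤ) with hw
        have hwp : w < p := by
          rw [hw]; exact_mod_cast ZMod.val_lt _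
        have hw0 : 0 ≤ w := by rw [hw]; positivity
        obtain ⟨a, b, hab⟩ := hc13
        have h30 : e3 ≠ 0 := by omega
        have key : e3 ∣ w - (w * a % e3) * e1 := by
          have : w - (w * a % e3) * e1 = e3 * (w * b + (w * a / e3) * e1) := by
            have q := Int.emod_add_mul_ediv (w * a) e3
            have : w * a % e3 = w * a - e3 * (w * a / e3) := by linarith
            rw [this]
            linear_combination (-w) * hab
          exact ⟨_, this⟩
        obtain ⟨i, hi⟩ := key
        have l0 := Int.emod_nonneg (w * a) h30
        have l1 := Int.emod_lt_abs (w * a) h30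
        rw [Int.abs_eq_natAbs] at l1
        refine ⟨w * a % e3, i, by omega, ?_, by linarith⟩
        have : (i.natAbs * D : ℕ) = (w - (w * a % e3) * e1).natAbs := by
          rw [hi, Int.natAbs_mul, h3, mul_comm]
        rw [this]
        have t1 : ((w * a % e3) * e1).natAbs ≤ D * D := by
          rw [Int.natAbs_mul]; exact Nat.mul_le_mul (by omega) h1'
        generalize (w * a % e3) * e1 = z at *
        omega
      have hr' : r' = (r + l * e1) + i * e3 := by
        have : ((l * e1 + i * e3 : ℤ) : ZMod p) = r' - r := by
          rw [hli]; simp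
        push_cast at this
        linear_combination -this
      have t1 := steps f (e1 : ZMod p) G s1 l r
      have t2 := steps f (e3 : ZMod p) G s3 i (r + l * e1)
      rw [← hr'] at t2
      have t3 := abs_sub_le (f r') (f (r + l * e1)) (f r)
      have bl : (l.natAbs : ℝ) ≤ D := by exact_mod_cast hl
      have bi : (i.natAbs : ℝ) * D ≤ p + D * D := by exact_mod_cast hi
      have : (l.natAbs : ℝ) + i.natAbs ≤ 2 * p / D := by
        rw [le_div_iff₀ hD0]
        nlinarith
      calc |f r' - f r| ≤ ((l.natAbs : ℝ) + i.natAbs) * G := by linarith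
        _ ≤ _ := mul_le_mul_of_nonneg_right this hG0
    have total : ∑ r', f r' = (J1 : ℝ) * J2 * J3 := by
      rw [hf]
      unfold Ncnt
      rw [Finset.sum_comm]
      have : ∀ i ∈ Finset.range J1, (∑ r' : ZMod p, ∑ j ∈ Finset.range J2, ∑ k ∈ Finset.range J3,
          if ((e1 : ZMod p) * (i : ZMod p) + (e2 : ZMod p) * (j : ZMod p) + (e3 : ZMod p) * (k : ZMod p) = r')
          then (1 : ℝ) else 0) = (J2 : ℝ) * J3 := by
        intro i _
        rw [Finset.sum_comm]
        have : ∀ j ∈ Finset.range J2, (∑ r' : ZMod p, ∑ k ∈ Finset.range J3,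
          if ((e1 : ZMod p) * (i : ZMod p) + (e2 : ZMod p) * (j : ZMod p) + (e3 : ZMod p) * (k : ZMod p) = r')
          then (1 : ℝ) else 0) = (J3 : ℝ) := by
          intro j _
          rw [Finset.sum_comm]
          simp
        rw [Finset.sum_congr rfl this]
        simp
      rw [Finset.sum_congr rfl this]
      simp [mul_assoc]
    have avg : (p : ℝ) * f r ≤ (J1 : ℝ) * J2 * J3 + p * (2 * p / D * G) := by
      have : ∑ r' : ZMod p, f r ≤ ∑ r' : ZMod p, (f r' + 2 * p / D * G) := by
        refine Finset.sum_le_sum fun r' _ => ?_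
        have := (abs_le.mp (diff r')).1
        linarith
      rw [Finset.sum_add_distrib, total] at this
      simpa [ZMod.card] using this
    have hfin : 2 * p / D * G ≤ 36 * (J : ℝ)^2 / D := by
      have e : 2 * p / D * G = 24 * (J:ℝ)^2 / D + 6 * p * J / D ^ 2 := by
        rw [hGdef]; field_simp; ring
      have e2 : 6 * p * J / (D:ℝ) ^ 2 ≤ 12 * (J:ℝ)^2 / D := by
        rw [div_le_div_iff₀ (by positivity) hD0]
        have : (p:ℝ) ≤ D * J := rJm.trans (mul_le_mul_of_nonneg_right rmD hJ0)
        have := mul_le_mul_of_nonneg_right this (by positivity : (0:ℝ) ≤ J * D)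
        nlinarith [this, (by positivity : (0:ℝ) ≤ D * J * (J * D))]
      rw [e]
      have : 36 * (J : ℝ)^2 / D = 24 * (J:ℝ)^2 / D + 12 * (J:ℝ)^2 / D := by ring
      linarith
    have : f r ≤ (J1 : ℝ) * J2 * J3 / p + 2 * p / D * G := by
      rw [← sub_le_iff_le_add, le_div_iff₀ hp0]
      linarith
    linarith
  · have rmD : (D:ℝ) ≤ m := by exact_mod_cast hmD
    have c1 : Ncnt p e1 e2 e3 J1 J2 J3 r ≤ J * G := by
      have hG0 : 0 ≤ G := le_trans (M_nonneg _ _ _ _ _ _) (G12 0)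
      have : Ncnt p e1 e2 e3 J1 J2 J3 r = ∑ i ∈ Finset.range J1,
          Mcnt p e2 e3 J2 J3 (r - e1 * i) := by
        unfold Ncnt Mcnt
        refine Finset.sum_congr rfl fun i _ => Finset.sum_congr rfl fun j _ =>
          Finset.sum_congr rfl fun k _ => ?_
        congr 1
        rw [eq_sub_iff_add_eq, eq_iff_iff]
        constructor <;> intro h <;> rw [← h] <;> ring
      rw [this]
      calc _ ≤ ∑ i ∈ Finset.range J1, G := Finset.sum_le_sum fun i _ => G23 _
        _ = J1 * G := by simp
        _ ≤ J * G := mul_le_mul_of_nonneg_right (by exact_mod_cast hJ1) hG0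
    have c2 : (J:ℝ) * G ≤ 36 * (J:ℝ)^2 / D := by
      have e : (J:ℝ) * G = 12 * (J:ℝ)^2 * (J / p) + 3 * (J:ℝ)^2 / D := by rw [hGdef]; ring
      have : (J:ℝ) / p ≤ 2 / D := by
        rw [div_le_div_iff₀ hp0 hD0]
        nlinarith [mul_le_mul_of_nonneg_right rmD hJ0]
      have := mul_le_mul_of_nonneg_left this (by positivity : 0 ≤ 12 * (J:ℝ)^2)
      have q : 0 ≤ (J:ℝ)^2 / D := by positivity
      have e1 : 12 * (J:ℝ)^2 * (2 / D) = 24 * ((J:ℝ)^2 / D) := by ring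
      have e2 : 3 * (J:ℝ)^2 / D = 3 * ((J:ℝ)^2 / D) := by ring
      have e3 : 36 * (J:ℝ)^2 / D = 36 * ((J:ℝ)^2 / D) := by ring
      rw [e, e3, e2]
      linarith
    have : (0:ℝ) ≤ (J1 : ℝ) * J2 * J3 / p := by positivity
    linarith

theorem N_sorted (p : ℕ) (hp : p.Prime) (e1 e2 e3 : ℤ) (E K J J1 J2 J3 m : ℕ) (hE : 1 ≤ E)
    (hE3 : E ≤ e3.natAbs) (h13 : e1.natAbs ≤ e3.natAbs) (h21 : e2.natAbs ≤ e1.natAbs)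
    (hsum : e1 + e2 + e3 = 0) (hK3 : e3.natAbs ≤ K)
    (hc12 : IsCoprime e1 e2) (hc13 : IsCoprime e1 e3) (hc23 : IsCoprime e2 e3)
    (hJ1 : J1 ≤ J) (hJ2 : J2 ≤ J) (hJ3 : J3 ≤ J) (hKJ : K ≤ J)
    (hKp : 4 * K ^ 2 ≤ p) (hm : 1 ≤ m) (hJm : p ≤ m * J) (hJm' : m * J ≤ 2 * p) (r : ZMod p) :
    Ncnt p e1 e2 e3 J1 J2 J3 r ≤ (J1 : ℝ) * J2 * J3 / p + 36 * (J : ℝ) ^ 2 / E := by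
  have h := N_bound p hp e1 e2 e3 e3.natAbs J J1 J2 J3 m (by omega) (by omega) h13 (by omega) rfl
    hc12 hc13 hc23 hJ1 hJ2 hJ3 (by omega)
    (le_trans (Nat.mul_le_mul_left 4 (Nat.pow_le_pow_left hK3 2)) hKp) hm hJm hJm' r
  have : 36 * (J : ℝ) ^ 2 / e3.natAbs ≤ 36 * (J : ℝ) ^ 2 / E := by
    apply div_le_div_of_nonneg_left (by positivity)
    · exact_mod_cast hE
    · exact_mod_cast hE3
  linarith

theorem N_sym (p : ℕ) (hp : p.Prime) (e1 e2 e3 : ℤ) (E K J J1 J2 J3 m : ℕ) (hE : 1 ≤ E)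
    (hE3 : E ≤ e1.natAbs ∨ E ≤ e2.natAbs ∨ E ≤ e3.natAbs)
    (hsum : e1 + e2 + e3 = 0) (hK1 : e1.natAbs ≤ K) (hK2 : e2.natAbs ≤ K) (hK3 : e3.natAbs ≤ K)
    (hc12 : IsCoprime e1 e2) (hc13 : IsCoprime e1 e3) (hc23 : IsCoprime e2 e3)
    (hJ1 : J1 ≤ J) (hJ2 : J2 ≤ J) (hJ3 : J3 ≤ J) (hKJ : K ≤ J)
    (hKp : 4 * K ^ 2 ≤ p) (hm : 1 ≤ m) (hJm : p ≤ m * J) (hJm' : m * J ≤ 2 * p) (r : ZMod p) :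
    Ncnt p e1 e2 e3 J1 J2 J3 r ≤ (J1 : ℝ) * J2 * J3 / p + 36 * (J : ℝ) ^ 2 / E := by
  rcases le_total e1.natAbs e2.natAbs with h12 | h12 <;>
  rcases le_total e1.natAbs e3.natAbs with h13 | h13 <;>
  rcases le_total e2.natAbs e3.natAbs with h23 | h23
  · rw [Ncnt_swap12, mul_comm (J1 : ℝ) J2]
    exact N_sorted p hp e2 e1 e3 E K J J2 J1 J3 m hE (by omega) h23 h12 (by omega) hK3 hc12.symm
      hc23 hc13 hJ2 hJ1 hJ3 hKJ hKp hm hJm hJm' r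
  · rw [Ncnt_swap23, Ncnt_swap12,
      show (J1 : ℝ) * J2 * J3 = J3 * J1 * J2 by ring]
    exact N_sorted p hp e3 e1 e2 E K J J3 J1 J2 m hE (by omega) h23 h13 (by omega) hK2 hc13.symm
      hc23.symm hc12 hJ3 hJ1 hJ2 hKJ hKp hm hJm hJm' r
  · rw [Ncnt_swap12, mul_comm (J1 : ℝ) J2]
    exact N_sorted p hp e2 e1 e3 E K J J2 J1 J3 m hE (by omega) h23 h12 (by omega) hK3 hc12.symm
      hc23 hc13 hJ2 hJ1 hJ3 hKJ hKp hm hJm hJm' r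
  · rw [Ncnt_swap23, 
      show (J1 : ℝ) * J2 * J3 = J1 * J3 * J2 by ring]
    exact N_sorted p hp e1 e3 e2 E K J J1 J3 J2 m hE (by omega) h12 h13 (by omega) hK2 hc13
      hc12 hc23.symm hJ1 hJ3 hJ2 hKJ hKp hm hJm hJm' r
  · exact N_sorted p hp e1 e2 e3 E K J J1 J2 J3 m hE (by omega) h13 h12 (by omega) hK3 hc12
      hc13 hc23 hJ1 hJ2 hJ3 hKJ hKp hm hJm hJm' r
  · rw [Ncnt_swap23, 
      show (J1 : ℝ) * J2 * J3 = J1 * J3 * J2 by ring]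
    exact N_sorted p hp e1 e3 e2 E K J J1 J3 J2 m hE (by omega) (by omega) (by omega) (by omega) hK2 hc13
      hc12 hc23.symm hJ1 hJ3 hJ2 hKJ hKp hm hJm hJm' r
  · rw [Ncnt_swap23, Ncnt_swap12, Ncnt_swap23,
      show (J1 : ℝ) * J2 * J3 = J3 * J2 * J1 by ring]
    exact N_sorted p hp e3 e2 e1 E K J J3 J2 J1 m hE (by omega) (by omega) (by omega) (by omega) hK1 hc23.symm
      hc13.symm hc12.symm hJ3 hJ2 hJ1 hKJ hKp hm hJm hJm' r
  · rw [Ncnt_swap12, Ncnt_swap23,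
      show (J1 : ℝ) * J2 * J3 = J2 * J3 * J1 by ring]
    exact N_sorted p hp e2 e3 e1 E K J J2 J3 J1 m hE (by omega) (by omega) (by omega) (by omega) hK1 hc23
      hc12.symm hc13.symm hJ2 hJ3 hJ1 hKJ hKp hm hJm hJm' r

def clsJ (p m c : ℕ) : ℕ := ((Finset.range p).filter fun v => v % m = c).card

theorem clsJ_eq (p m c : ℕ) (hm : 1 ≤ m) (hc : c < m) (hmp : m ≤ p) :
    clsJ p m c = (p - 1 - c) / m + 1 := by
  unfold clsJ
  rw [← Finset.card_range ((p - 1 - c) / m + 1)]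
  symm
  apply Finset.card_bij (fun j _ => c + m * j)
  · intro j hj
    rw [Finset.mem_range, Nat.lt_succ_iff, Nat.le_div_iff_mul_le (by omega)] at hj
    rw [Finset.mem_filter, Finset.mem_range]
    refine ⟨by rw [mul_comm]; omega, ?_⟩
    rw [Nat.add_mul_mod_self_left, Nat.mod_eq_of_lt hc]
  · intro j _ j' _ h
    have : m * j = m * j' := by omega
    exact Nat.eq_of_mul_eq_mul_left (by omega) this
  · intro v hv
    rw [Finset.mem_filter, Finset.mem_range] at hv
    refine ⟨v / m, ?_, ?_⟩
    · rw [Finset.mem_range, Nat.lt_succ_iff, Nat.le_div_iff_mul_le (by omega)]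
      have := Nat.div_add_mod v m
      rw [mul_comm] at this
      omega
    · have := Nat.div_add_mod v m
      omega

theorem hash_inj (p : ℕ) (hp : p.Prime) (x y : ℕ) (hx : x < p) (hy : y < p) (hxy : x ≠ y)
    (s t s' t' : ℕ) (hs : s < p) (ht : t < p) (hs' : s' < p) (ht' : t' < p)
    (h1 : (s * x + t) % p = (s' * x + t') % p) (h2 : (s * y + t) % p = (s' * y + t') % p) :
    s = s' ∧ t = t' := by
  have : Fact p.Prime := ⟨hp⟩
  have k1 : (s : ZMod p) * x + t = s' * x + t' := by
    have := (ZMod.natCast_eq_natCast_iff (s * x + t) (s' * x + t') p).mpr h1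
    push_cast at this; exact this
  have k2 : (s : ZMod p) * y + t = s' * y + t' := by
    have := (ZMod.natCast_eq_natCast_iff (s * y + t) (s' * y + t') p).mpr h2
    push_cast at this; exact this
  have inj : ∀ u v : ℕ, u < p → v < p → (u : ZMod p) = v → u = v := by
    intro u v hu hv h
    rw [ZMod.natCast_eq_natCast_iff'] at h
    rwa [Nat.mod_eq_of_lt hu, Nat.mod_eq_of_lt hv] at h
  have hne : (x : ZMod p) - y ≠ 0 := fun h => hxy (inj x y hx hy (sub_eq_zero.mp h))
  have k3 : ((s : ZMod p) - s') * (x - y) = 0 := by linear_combination k1 - k2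
  have k4 : (s : ZMod p) = s' := by
    rcases mul_eq_zero.mp k3 with h | h
    · exact sub_eq_zero.mp h
    · exact absurd h hne
  have k5 : (t : ZMod p) = t' := by rw [k4] at k1; linear_combination k1
  exact ⟨inj _ _ hs hs' k4, inj _ _ ht ht' k5⟩

theorem pair_count (p : ℕ) (hp : p.Prime) (x y : ℕ) (hx : x < p) (hy : y < p) (hxy : x ≠ y)
    (P Q : ℕ → Prop) [DecidablePred P] [DecidablePred Q] :
    ((Finset.range p ×ˢ Finset.range p).filter fun w : ℕ × ℕ =>
      P ((w.1 * x + w.2) % p) ∧ Q ((w.1 * y + w.2) % p)).card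
    = ((Finset.range p).filter P).card * ((Finset.range p).filter Q).card := by
  set S := Finset.range p ×ˢ Finset.range p with hS
  set f : ℕ × ℕ → ℕ × ℕ := fun w => ((w.1 * x + w.2) % p, (w.1 * y + w.2) % p) with hf
  have hinj : Set.InjOn f S := by
    intro w hw w' hw' h
    simp only [hS, Finset.coe_product, Finset.coe_range, Set.mem_prod, Set.mem_Iio] at hw hw'
    simp only [hf, Prod.mk.injEq] at h
    have := hash_inj p hp x y hx hy hxy _ _ _ _ hw.1 hw.2 hw'.1 hw'.2 h.1 h.2
    exact Prod.ext this.1 this.2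
  have himg : S.image f = S := by
    apply Finset.eq_of_subset_of_card_le
    · intro w hw
      rw [Finset.mem_image] at hw
      obtain ⟨v, _, rfl⟩ := hw
      simp only [hS, hf, Finset.mem_product, Finset.mem_range]
      exact ⟨Nat.mod_lt _ hp.pos, Nat.mod_lt _ hp.pos⟩
    · rw [Finset.card_image_of_injOn hinj]
  rw [← Finset.card_product, ← Finset.filter_product, ← hS]
  conv_rhs => rw [← himg]
  rw [Finset.filter_image, Finset.card_image_of_injOn]
  exact hinj.mono (by intro w hw; simp at hw ⊢; exact hw.1)

noncomputable def gw (d1 d2 : ℕ) : ℝ := (Nat.gcd d1 d2 : ℝ) / (max d1 d2 : ℕ)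

theorem triple_count (p : ℕ) (hp : p.Prime) (U m x y z a b : ℕ) (hU : 4 * U ^ 2 < p)
    (hm : 1 ≤ m) (hmU : m ≤ U) (hx : x < U) (hy : y < U) (hz : z < U)
    (hxy : x ≠ y) (hxz : x ≠ z) (hyz : y ≠ z) (ha : a < m) (hb : b < m) :
    (((Finset.range p ×ˢ Finset.range p).filter fun w : ℕ × ℕ =>
      ((w.1 * x + w.2) % p) % m = a ∧ ((w.1 * y + w.2) % p) % m = b ∧
        ((w.1 * z + w.2) % p) % m = b).card : ℝ)
    ≤ (clsJ p m a : ℝ) * clsJ p m b * clsJ p m b / p + 36 * ((p / m + 1 : ℕ) : ℝ) ^ 2 *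
      gw ((y : ℤ) - x).natAbs ((z : ℤ) - x).natAbs := by
  have : Fact p.Prime := ⟨hp⟩
  have hUp : U < p := by nlinarith
  have hmp : m ≤ p := by omega
  obtain ⟨g, hg⟩ : ∃ g : ℕ, g = Int.gcd ((y : ℤ) - x) ((z : ℤ) - x) := ⟨_, rfl⟩
  have hg0 : 0 < g := by
    rw [hg]; apply Int.gcd_pos_of_ne_zero_left; omega
  obtain ⟨β, γ, hcop, hβ, hγ⟩ : ∃ β γ : ℤ, Int.gcd β γ = 1 ∧ (y : ℤ) - x = β * g ∧
      (z : ℤ) - x = γ * g := by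
    rw [hg]
    exact Int.exists_gcd_one (by rw [← hg]; exact hg0)
  have hco : IsCoprime β γ := Int.isCoprime_iff_gcd_eq_one.mpr hcop
  have hβ0 : β ≠ 0 := by rintro rfl; omega
  have nb : (((y : ℤ) - x).natAbs) = β.natAbs * g := by rw [hβ, Int.natAbs_mul]; simp
  have nc : (((z : ℤ) - x).natAbs) = γ.natAbs * g := by rw [hγ, Int.natAbs_mul]; simp
  have nbc : (((y : ℤ) - z).natAbs) = (β - γ).natAbs * g := by
    rw [show (y : ℤ) - z = (β - γ) * g by rw [sub_mul, ← hβ, ← hγ]; ring, Int.natAbs_mul]; simp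
  have leU : ∀ n N : ℕ, N = n * g → N ≤ U → n ≤ U := by
    intro n N h1 h2
    exact le_trans (Nat.le_mul_of_pos_right n hg0) (h1 ▸ h2)
  have gweq : gw ((y : ℤ) - x).natAbs ((z : ℤ) - x).natAbs
      = 1 / ((max β.natAbs γ.natAbs : ℕ) : ℝ) := by
    unfold gw
    have e1 : Nat.gcd ((y : ℤ) - x).natAbs ((z : ℤ) - x).natAbs = g := hg.symm
    have e2 : max ((y : ℤ) - x).natAbs ((z : ℤ) - x).natAbs = max β.natAbs γ.natAbs * g := by
      rw [nb, nc, max_mul]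
    have : (max β.natAbs γ.natAbs : ℕ) ≠ 0 := by omega
    rw [e1, e2]
    rw [Nat.cast_mul]
    have : ((max β.natAbs γ.natAbs : ℕ) : ℝ) ≠ 0 := by exact_mod_cast this
    have : (g : ℝ) ≠ 0 := by exact_mod_cast hg0.ne'
    field_simp
  have natinj : ∀ u : ℕ, 0 < u → u < p → (u : ZMod p) ≠ 0 := by
    intro u hu hup h
    rw [ZMod.natCast_eq_zero_iff] at h
    exact absurd (Nat.le_of_dvd hu h) (by omega)
  have hgp : g < p := by
    have : g ≤ ((y : ℤ) - x).natAbs := by rw [nb]; exact Nat.le_mul_of_pos_left _ (by omega)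
    omega
  have gne := natinj g hg0 hgp
  have mne := natinj m hm (by omega)
  set J := p / m + 1 with hJ
  have hJa : clsJ p m a ≤ J := by
    rw [clsJ_eq p m a hm ha hmp]
    exact Nat.succ_le_succ (Nat.div_le_div_right (by omega))
  have hJb : clsJ p m b ≤ J := by
    rw [clsJ_eq p m b hm hb hmp]
    exact Nat.succ_le_succ (Nat.div_le_div_right (by omega))
  have hUJ : U ≤ J := by
    have : U ≤ p / m := by
      rw [Nat.le_div_iff_mul_le (by omega)]
      nlinarith
    omega
  have hpJ : p ≤ m * J := by
    have := Nat.div_add_mod p m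
    have := Nat.mod_lt p (show m > 0 by omega)
    rw [hJ, mul_add]; omega
  have hpJ' : m * J ≤ 2 * p := by
    have := Nat.div_add_mod p m
    rw [hJ, mul_add]; omega
  set r : ZMod p := -((m : ZMod p)⁻¹ * ((β - γ) * a + γ * b + (-β) * b)) with hr
  have hN := N_sym p hp (β - γ) γ (-β) (max β.natAbs γ.natAbs) U J (clsJ p m a) (clsJ p m b)
    (clsJ p m b) m (by omega) (by omega) (by ring) (leU _ _ nbc (by omega)) (leU _ _ nc (by omega))
    (by rw [Int.natAbs_neg]; exact leU _ _ nb (by omega))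
    (by
      obtain ⟨s, t, h⟩ := hco
      exact ⟨s, s + t, by linear_combination h⟩)
    (by
      obtain ⟨s, t, h⟩ := hco
      exact ⟨-t, -(s + t), by linear_combination h⟩)
    hco.symm.neg_right hJa hJb hJb hUJ hU.le hm hpJ hpJ' r
  rw [gweq, mul_one_div]
  refine le_trans ?_ hN
  set T := (Finset.range (clsJ p m a) ×ˢ (Finset.range (clsJ p m b) ×ˢ Finset.range (clsJ p m b))).filter
    (fun t : ℕ × ℕ × ℕ => ((β - γ : ℤ) : ZMod p) * (t.1 : ZMod p) + ((γ : ℤ) : ZMod p) * (t.2.1 : ZMod p)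
      + ((-β : ℤ) : ZMod p) * (t.2.2 : ZMod p) = r) with hT
  have hNT : Ncnt p (β - γ) γ (-β) (clsJ p m a) (clsJ p m b) (clsJ p m b) r = T.card := by
    unfold Ncnt
    rw [hT, Finset.card_filter, Finset.sum_product]
    push_cast
    refine Finset.sum_congr rfl fun i _ => ?_
    rw [Finset.sum_product]
  rw [hNT, Nat.cast_le]
  have hlt : ∀ v c, v < p → v % m = c → v / m < clsJ p m c := by
    intro v c hv hc
    have hcm : c < m := hc ▸ Nat.mod_lt _ (by omega)
    rw [clsJ_eq p m c hm hcm hmp, Nat.lt_succ_iff, Nat.le_div_iff_mul_le (by omega)]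
    have := Nat.div_add_mod v m
    rw [mul_comm] at this
    omega
  apply Finset.card_le_card_of_injOn (fun w : ℕ × ℕ => (((w.1 * x + w.2) % p) / m,
    ((w.1 * y + w.2) % p) / m, ((w.1 * z + w.2) % p) / m))
  · intro w hw
    simp only [Finset.coe_filter, Finset.mem_product, Finset.mem_range, Set.mem_ofPred_eq] at hw
    obtain ⟨hw0, wa, wb, wc⟩ := hw
    rw [hT, Finset.mem_coe, Finset.mem_filter]
    simp only [Finset.mem_product, Finset.mem_range]
    refine ⟨⟨hlt _ _ (Nat.mod_lt _ hp.pos) wa, hlt _ _ (Nat.mod_lt _ hp.pos) wb,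
      hlt _ _ (Nat.mod_lt _ hp.pos) wc⟩, ?_⟩
    have cast : ∀ q c : ℕ, ((w.1 * q + w.2) % p) % m = c →
        (m : ZMod p) * (((w.1 * q + w.2) % p / m : ℕ) : ZMod p) + c = w.1 * q + w.2 := by
      intro q c h
      have := Nat.div_add_mod ((w.1 * q + w.2) % p) m
      rw [h] at this
      have := congrArg (Nat.cast : ℕ → ZMod p) this
      rw [ZMod.natCast_mod] at this
      push_cast at this
      exact this
    have ca := cast x a wa
    have cb := cast y b wb
    have cc := cast z b wc
    generalize (((w.1 * x + w.2) % p / m : ℕ) : ZMod p) = i at *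
    generalize (((w.1 * y + w.2) % p / m : ℕ) : ZMod p) = j at *
    generalize (((w.1 * z + w.2) % p / m : ℕ) : ZMod p) = k at *
    have zβ : (y : ZMod p) - x = β * g := by exact_mod_cast congrArg (Int.cast : ℤ → ZMod p) hβ
    have zγ : (z : ZMod p) - x = γ * g := by exact_mod_cast congrArg (Int.cast : ℤ → ZMod p) hγ
    apply mul_left_cancel₀ (mul_ne_zero mne gne)
    have : (m : ZMod p) * g * r = -(g * ((β - γ) * a + γ * b + (-β) * b)) := by
      rw [hr]; field_simp
    rw [this]
    push_cast
    have yx : (y : ZMod p) = x + β * g := by linear_combination zβ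
    have zx : (z : ZMod p) = x + γ * g := by linear_combination zγ
    rw [yx] at cb
    rw [zx] at cc
    linear_combination (g : ZMod p) * (β - γ) * ca + (g : ZMod p) * γ * cb - (g : ZMod p) * β * cc
  · intro w hw w' hw' h
    simp only [Finset.coe_filter, Finset.mem_product, Finset.mem_range, Set.mem_ofPred_eq] at hw hw'
    simp only [Prod.mk.injEq] at h
    obtain ⟨hw0, wa, wb, wc⟩ := hw
    obtain ⟨hw0', wa', wb', wc'⟩ := hw'
    have e1 : (w.1 * x + w.2) % p = (w'.1 * x + w'.2) % p := by
      rw [← Nat.div_add_mod ((w.1 * x + w.2) % p) m, ← Nat.div_add_mod ((w'.1 * x + w'.2) % p) m,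
        h.1, wa, wa']
    have e2 : (w.1 * y + w.2) % p = (w'.1 * y + w'.2) % p := by
      rw [← Nat.div_add_mod ((w.1 * y + w.2) % p) m, ← Nat.div_add_mod ((w'.1 * y + w'.2) % p) m,
        h.2.1, wb, wb']
    have := hash_inj p hp x y (by omega) (by omega) hxy _ _ _ _ hw0.1 hw0.2 hw0'.1 hw0'.2 e1 e2
    exact Prod.ext this.1 this.2

theorem gcd_sum (M : ℕ) (hM : 1 ≤ M) :
    ∑ d ∈ Finset.Ioc 0 M, (Nat.gcd d M : ℝ) / M ≤ (((Finset.Ioc 0 M).filter fun g => g ∣ M).card : ℝ) := by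
  have hM0 : (0:ℝ) < M := by exact_mod_cast hM
  have h1 : ∀ d ∈ Finset.Ioc 0 M, (Nat.gcd d M : ℝ) / M ≤
      ∑ g ∈ (Finset.Ioc 0 M).filter (fun g => g ∣ M), if g ∣ d then (g : ℝ) / M else 0 := by
    intro d hd
    have hmem : Nat.gcd d M ∈ (Finset.Ioc 0 M).filter (fun g => g ∣ M) := by
      rw [Finset.mem_filter, Finset.mem_Ioc]
      exact ⟨⟨Nat.gcd_pos_of_pos_right _ hM, Nat.gcd_le_right _ hM⟩, Nat.gcd_dvd_right _ _⟩
    have := Finset.single_le_sum (f := fun g : ℕ => if g ∣ d then (g : ℝ) / M else 0)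
      (fun g _ => by positivity) hmem
    simp only [Nat.gcd_dvd_left, if_true] at this
    exact this
  refine (Finset.sum_le_sum h1).trans ?_
  rw [Finset.sum_comm, Finset.card_eq_sum_ones]
  push_cast
  refine Finset.sum_le_sum fun g hg => ?_
  rw [Finset.mem_filter, Finset.mem_Ioc] at hg
  rw [← Finset.sum_filter, Finset.sum_const, Nat.Ioc_filter_dvd_card_eq_div, nsmul_eq_mul,
    mul_div_assoc', div_le_one hM0]
  exact_mod_cast Nat.div_mul_le_self M g

theorem div_sum (n : ℕ) :
    ∑ M ∈ Finset.Ioc 0 n, (((Finset.Ioc 0 M).filter fun g => g ∣ M).card : ℝ) ≤ n * (1 + Real.log n) := by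
  have h1 : ∀ M ∈ Finset.Ioc 0 n, (((Finset.Ioc 0 M).filter fun g => g ∣ M).card : ℝ) ≤
      ∑ g ∈ Finset.Ioc 0 n, if g ∣ M then (1:ℝ) else 0 := by
    intro M hM
    rw [Finset.mem_Ioc] at hM
    rw [← Finset.sum_filter, Finset.sum_const, nsmul_eq_mul, mul_one]
    exact_mod_cast Finset.card_le_card (Finset.filter_subset_filter _
      (Finset.Ioc_subset_Ioc_right hM.2))
  refine (Finset.sum_le_sum h1).trans ?_
  rw [Finset.sum_comm]
  have h2 : ∀ g ∈ Finset.Ioc 0 n, (∑ M ∈ Finset.Ioc 0 n, if g ∣ M then (1:ℝ) else 0) ≤ n * (g : ℝ)⁻¹ := by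
    intro g hg
    rw [← Finset.sum_filter, Finset.sum_const, Nat.Ioc_filter_dvd_card_eq_div, nsmul_eq_mul, mul_one]
    exact Nat.cast_div_le
  refine (Finset.sum_le_sum h2).trans ?_
  rw [← Finset.mul_sum]
  refine mul_le_mul_of_nonneg_left ?_ (by positivity)
  have := harmonic_le_one_add_log n
  rw [harmonic_eq_sum_Icc] at this
  push_cast at this
  exact this

theorem gw_sum (n : ℕ) :
    ∑ d1 ∈ Finset.Ioc 0 n, ∑ d2 ∈ Finset.Ioc 0 n, gw d1 d2 ≤ 2 * (n * (1 + Real.log n)) := by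
  have half : ∑ M ∈ Finset.Ioc 0 n, ∑ d ∈ Finset.Ioc 0 n, (if d ≤ M then (Nat.gcd d M : ℝ) / M else 0)
      ≤ n * (1 + Real.log n) := by
    refine le_trans (Finset.sum_le_sum fun M hM => ?_) (div_sum n)
    rw [Finset.mem_Ioc] at hM
    refine le_trans (le_of_eq ?_) (gcd_sum M hM.1)
    rw [← Finset.sum_filter]
    refine Finset.sum_congr ?_ fun _ _ => rfl
    ext d
    simp only [Finset.mem_filter, Finset.mem_Ioc]
    omega
  have h : ∀ d1 ∈ Finset.Ioc 0 n, ∀ d2 ∈ Finset.Ioc 0 n, gw d1 d2 ≤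
      (if d2 ≤ d1 then (Nat.gcd d2 d1 : ℝ) / d1 else 0) + (if d1 ≤ d2 then (Nat.gcd d1 d2 : ℝ) / d2 else 0) := by
    intro d1 _ d2 _
    unfold gw
    rcases le_total d1 d2 with h | h
    · rw [max_eq_right h, if_pos h]
      have : (0:ℝ) ≤ (if d2 ≤ d1 then (Nat.gcd d2 d1 : ℝ) / d1 else 0) := by positivity
      linarith
    · rw [max_eq_left h, if_pos h, Nat.gcd_comm d1 d2]
      have : (0:ℝ) ≤ (if d1 ≤ d2 then (Nat.gcd d2 d1 : ℝ) / d2 else 0) := by positivity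
      linarith
  refine le_trans (Finset.sum_le_sum fun d1 h1 => Finset.sum_le_sum fun d2 h2 => h d1 h1 d2 h2) ?_
  simp only [Finset.sum_add_distrib]
  have e : ∑ d1 ∈ Finset.Ioc 0 n, ∑ d2 ∈ Finset.Ioc 0 n, (if d1 ≤ d2 then (Nat.gcd d1 d2 : ℝ) / d2 else 0)
    = ∑ M ∈ Finset.Ioc 0 n, ∑ d ∈ Finset.Ioc 0 n, (if d ≤ M then (Nat.gcd d M : ℝ) / M else 0) :=
    Finset.sum_comm
  rw [e]
  linarith

theorem gw_nonneg (a b : ℕ) : 0 ≤ gw a b := by unfold gw; positivity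

theorem fold_sum (U x : ℕ) (X : Finset ℕ) (hX : X ⊆ Finset.range U) (hx : x < U) (hxX : x ∉ X)
    (f : ℕ → ℝ) (hf : ∀ n, 0 ≤ f n) :
    ∑ y ∈ X, f ((y : ℤ) - x).natAbs ≤ 2 * ∑ d ∈ Finset.Ioc 0 U, f d := by
  have hmap : ∀ y ∈ X, ((y : ℤ) - x).natAbs ∈ Finset.Ioc 0 U := by
    intro y hy
    have h1 := Finset.mem_range.mp (hX hy)
    have h2 : y ≠ x := by rintro rfl; exact hxX hy
    rw [Finset.mem_Ioc]; omega
  rw [← Finset.sum_fiberwise_of_maps_to hmap, Finset.mul_sum]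
  refine Finset.sum_le_sum fun d hd => ?_
  have : ∀ y ∈ X.filter (fun y : ℕ => ((y : ℤ) - x).natAbs = d), f ((y : ℤ) - x).natAbs = f d := by
    intro y hy
    rw [(Finset.mem_filter.mp hy).2]
  rw [Finset.sum_congr rfl this, Finset.sum_const, nsmul_eq_mul]
  refine mul_le_mul_of_nonneg_right ?_ (hf d)
  have : X.filter (fun y : ℕ => ((y : ℤ) - x).natAbs = d) ⊆ {x + d, x - d} := by
    intro y hy
    have := (Finset.mem_filter.mp hy).2
    simp only [Finset.mem_insert, Finset.mem_singleton]
    omega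
  exact_mod_cast (Finset.card_le_card this).trans Finset.card_le_two

theorem gw_total (U x : ℕ) (hU : 2 ≤ U) (X : Finset ℕ) (hX : X ⊆ Finset.range U) (hx : x < U) (hxX : x ∉ X) :
    ∑ y ∈ X, ∑ z ∈ X, gw ((y : ℤ) - x).natAbs ((z : ℤ) - x).natAbs ≤ 16 * (U * Real.logb 2 U) := by
  have s1 : ∑ y ∈ X, ∑ z ∈ X, gw ((y : ℤ) - x).natAbs ((z : ℤ) - x).natAbs ≤
      ∑ y ∈ X, 2 * ∑ d ∈ Finset.Ioc 0 U, gw ((y : ℤ) - x).natAbs d :=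
    Finset.sum_le_sum fun y _ => fold_sum U x X hX hx hxX (fun d => gw ((y : ℤ) - x).natAbs d)
      (fun _ => gw_nonneg _ _)
  have s2 := fold_sum U x X hX hx hxX (fun d' => 2 * ∑ d ∈ Finset.Ioc 0 U, gw d' d)
    (fun _ => mul_nonneg (by norm_num) (Finset.sum_nonneg fun _ _ => gw_nonneg _ _))
  simp only [← Finset.mul_sum] at s1 s2
  have s3 := gw_sum U
  have hU' : (2:ℝ) ≤ U := by exact_mod_cast hU
  have l1 : 1 ≤ Real.logb 2 U := by
    rw [Real.le_logb_iff_rpow_le (by norm_num) (by linarith)]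
    simpa using hU'
  have l2 : Real.log U ≤ Real.logb 2 U := by
    rw [Real.logb, le_div_iff₀ (Real.log_pos (by norm_num))]
    have := Real.log_two_lt_d9
    have : 0 ≤ Real.log U := Real.log_nonneg (by linarith)
    nlinarith
  have : (U:ℝ) * (1 + Real.log U) ≤ U * (2 * Real.logb 2 U) :=
    mul_le_mul_of_nonneg_left (by linarith) (by linarith)
  linarith

theorem load_sum (p m b : ℕ) (X : Finset ℕ) (w : ℕ × ℕ) :
    (bucketLoad p m b X w : ℝ) = ∑ y ∈ X, if ((w.1 * y + w.2) % p) % m = b then (1:ℝ) else 0 := by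
  unfold bucketLoad
  rw [Finset.card_filter]
  push_cast
  rfl

theorem one_count (p : ℕ) (hp : p.Prime) (x m a : ℕ) (hx : x < p) :
    (condEvent p m x a).card = clsJ p m a * p := by
  have h2 := hp.two_le
  obtain ⟨y, hy, hxy⟩ : ∃ y, y < p ∧ x ≠ y := by
    by_cases h : x = 0
    · exact ⟨1, by omega, by omega⟩
    · exact ⟨0, by omega, h⟩
  have := pair_count p hp x y hx hy hxy (fun v => v % m = a) (fun _ => True)
  simp only [and_true, Finset.filter_true, Finset.card_range] at this
  exact this

theorem expLoad_eq (p : ℕ) (hp : p.Prime) (m b : ℕ) (X : Finset ℕ) (hX : ∀ y ∈ X, y < p) :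
    expLoad p m b X = X.card * ((clsJ p m b : ℝ) / p) := by
  have hp0 : (0:ℝ) < p := by exact_mod_cast hp.pos
  unfold expLoad
  simp only [load_sum]
  rw [Finset.sum_comm]
  have : ∀ y ∈ X, (∑ w ∈ Finset.range p ×ˢ Finset.range p,
      if ((w.1 * y + w.2) % p) % m = b then (1:ℝ) else 0) = clsJ p m b * p := by
    intro y hy
    have := one_count p hp y m b (hX y hy)
    unfold condEvent at this
    rw [Finset.card_filter] at this
    exact_mod_cast this
  rw [Finset.sum_congr rfl this, Finset.sum_const, nsmul_eq_mul]
  field_simp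

theorem cond_sum_eq (p : ℕ) (hp : p.Prime) (m x a b : ℕ) (X : Finset ℕ) (hX : ∀ y ∈ X, y < p)
    (hx : x < p) (hxX : x ∉ X) :
    ∑ w ∈ condEvent p m x a, (bucketLoad p m b X w : ℝ) = X.card * ((clsJ p m a : ℝ) * clsJ p m b) := by
  simp only [load_sum]
  rw [Finset.sum_comm]
  have : ∀ y ∈ X, (∑ w ∈ condEvent p m x a,
      if ((w.1 * y + w.2) % p) % m = b then (1:ℝ) else 0) = (clsJ p m a : ℝ) * clsJ p m b := by
    intro y hy
    have := pair_count p hp x y hx (hX y hy) (by rintro rfl; exact hxX hy)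
      (fun v => v % m = a) (fun v => v % m = b)
    rw [← Finset.filter_filter, Finset.card_filter] at this
    exact_mod_cast this
  rw [Finset.sum_congr rfl this, Finset.sum_const, nsmul_eq_mul]

theorem sq_sum_le (p : ℕ) (hp : p.Prime) (U m x a b : ℕ) (X : Finset ℕ) (hU2 : 2 ≤ U)
    (hX : X ⊆ Finset.range U) (hU : 4 * U ^ 2 < p)
    (hm : 1 ≤ m) (hmU : m ≤ U) (hx : x < U) (hxX : x ∉ X) (ha : a < m) (hb : b < m) :
    ∑ w ∈ condEvent p m x a, (bucketLoad p m b X w : ℝ) ^ 2 ≤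
      X.card * ((clsJ p m a : ℝ) * clsJ p m b) +
      (X.card : ℝ) ^ 2 * ((clsJ p m a : ℝ) * clsJ p m b * clsJ p m b / p) +
      36 * ((p / m + 1 : ℕ) : ℝ) ^ 2 * (16 * (U * Real.logb 2 U)) := by
  have hUp : U < p := by nlinarith
  have hX' : ∀ y ∈ X, y < U := fun y hy => Finset.mem_range.mp (hX hy)
  have e1 : ∑ w ∈ condEvent p m x a, (bucketLoad p m b X w : ℝ) ^ 2 =
      ∑ y ∈ X, ∑ z ∈ X, (((Finset.range p ×ˢ Finset.range p).filter fun w : ℕ × ℕ =>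
      ((w.1 * x + w.2) % p) % m = a ∧ ((w.1 * y + w.2) % p) % m = b ∧
        ((w.1 * z + w.2) % p) % m = b).card : ℝ) := by
    simp only [load_sum, sq, Finset.sum_mul_sum]
    rw [Finset.sum_comm]
    refine Finset.sum_congr rfl fun y _ => ?_
    rw [Finset.sum_comm]
    refine Finset.sum_congr rfl fun z _ => ?_
    rw [← Finset.filter_filter, Finset.card_filter]
    push_cast
    refine Finset.sum_congr rfl fun w _ => ?_
    by_cases h1 : ((w.1 * y + w.2) % p) % m = b <;> by_cases h2 : ((w.1 * z + w.2) % p) % m = b <;> simp [h1, h2]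
  have e2 : ∀ y ∈ X, ∀ z ∈ X, (((Finset.range p ×ˢ Finset.range p).filter fun w : ℕ × ℕ =>
      ((w.1 * x + w.2) % p) % m = a ∧ ((w.1 * y + w.2) % p) % m = b ∧
        ((w.1 * z + w.2) % p) % m = b).card : ℝ) ≤
      (if y = z then (clsJ p m a : ℝ) * clsJ p m b else 0) +
      ((clsJ p m a : ℝ) * clsJ p m b * clsJ p m b / p) +
      36 * ((p / m + 1 : ℕ) : ℝ) ^ 2 * gw ((y : ℤ) - x).natAbs ((z : ℤ) - x).natAbs := by
    intro y hy z hz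
    have hxy : x ≠ y := by rintro rfl; exact hxX hy
    have hxz : x ≠ z := by rintro rfl; exact hxX hz
    by_cases h : y = z
    · subst h
      have := pair_count p hp x y (by omega) ((hX' y hy).trans hUp) hxy
        (fun v => v % m = a) (fun v => v % m = b)
      simp only [and_self, if_true]
      rw [this]
      have g := gw_nonneg ((y : ℤ) - x).natAbs ((y : ℤ) - x).natAbs
      have : 0 ≤ 36 * ((p / m + 1 : ℕ) : ℝ) ^ 2 * gw ((y : ℤ) - x).natAbs ((y : ℤ) - x).natAbs :=
        mul_nonneg (by positivity) g
      have : 0 ≤ ((clsJ p m a : ℝ) * clsJ p m b * clsJ p m b / p) := by positivity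
      push_cast
      unfold clsJ at *
      push_cast at *
      linarith
    · rw [if_neg h, zero_add]
      exact triple_count p hp U m x y z a b hU hm hmU hx (hX' y hy) (hX' z hz) hxy hxz h ha hb
  rw [e1]
  refine (Finset.sum_le_sum fun y hy => Finset.sum_le_sum fun z hz => e2 y hy z hz).trans ?_
  simp only [Finset.sum_add_distrib, ← Finset.mul_sum, Finset.sum_ite_eq, Finset.sum_const, nsmul_eq_mul]
  have e3 : (∑ y ∈ X, if y ∈ X then (clsJ p m a : ℝ) * clsJ p m b else 0)
      = X.card * ((clsJ p m a : ℝ) * clsJ p m b) := by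
    rw [Finset.sum_congr rfl (fun y hy => if_pos hy), Finset.sum_const, nsmul_eq_mul]
  rw [e3]
  have := mul_le_mul_of_nonneg_left (gw_total U x hU2 X hX hx hxX)
    (by positivity : 0 ≤ 36 * ((p / m + 1 : ℕ) : ℝ) ^ 2)
  have e4 : (X.card : ℝ) * (X.card * ((clsJ p m a : ℝ) * clsJ p m b * clsJ p m b / p)) =
    (X.card : ℝ) ^ 2 * ((clsJ p m a : ℝ) * clsJ p m b * clsJ p m b / p) := by ring
  rw [e4]
  linarith

theorem stmt_14 : ∃ C : ℝ, ∀ (U k p m x a b : ℕ) (X : Finset ℕ),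
    2 ≤ U → X ⊆ Finset.range U → X.card = k → 1 ≤ k →
    p.Prime → 4 * U ^ 2 < p → 1 ≤ m → m ≤ U →
    x < U → x ∉ X → a < m → b < m →
    abs (expLoad p m b X - (k : ℝ) / m) ≤ C
    ∧ abs ((∑ στ ∈ condEvent p m x a, (bucketLoad p m b X στ : ℝ))
          / ((condEvent p m x a).card : ℝ) - (k : ℝ) / m) ≤ C
    ∧ ∀ lam : ℝ, 0 < lam →
        ((((condEvent p m x a).filter fun στ =>
            lam * Real.sqrt (expLoad p m b X)
              ≤ abs ((bucketLoad p m b X στ : ℝ) - expLoad p m b X)).card : ℝ)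
          / ((condEvent p m x a).card : ℝ))
        ≤ C * U * Real.logb 2 U / (lam ^ 2 * k) := by
  refine ⟨2305, ?_⟩
  intro U k p m x a b X hU2 hX hk hk1 hp hU hm hmU hx hxX ha hb
  have hUp : U < p := by nlinarith
  have hmp : m ≤ p := by omega
  have hX' : ∀ y ∈ X, y < p := fun y hy => (Finset.mem_range.mp (hX hy)).trans hUp
  have hkU : k ≤ U := by
    rw [← hk]; simpa using Finset.card_le_card hX
  have hp0 : (0:ℝ) < p := by exact_mod_cast hp.pos
  have hm0 : (0:ℝ) < m := by exact_mod_cast hm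
  have hk0 : (0:ℝ) < k := by exact_mod_cast hk1
  have hexp := expLoad_eq p hp m b X hX'
  have hcs := cond_sum_eq p hp m x a b X hX' (by omega) hxX
  have hcard := one_count p hp x m a (by omega)
  have hsq := sq_sum_le p hp U m x a b X hU2 hX hU hm hmU hx hxX ha hb
  rw [hk] at hexp hcs hsq
  have hdiv : 1 ≤ p / m := by rw [Nat.le_div_iff_mul_le (by omega)]; omega
  have lo : ∀ c, c < m → p / m ≤ clsJ p m c := by
    intro c hc
    rw [clsJ_eq p m c hm hc hmp]
    have h1 : (p - m) / m ≤ (p - 1 - c) / m := Nat.div_le_div_right (by omega)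
    have h2 : (p - m) / m = p / m - 1 := by have := Nat.div_eq_sub_div (show 0 < m by omega) hmp; omega
    omega
  have hi : ∀ c, c < m → clsJ p m c ≤ p / m + 1 := by
    intro c hc
    rw [clsJ_eq p m c hm hc hmp]
    exact Nat.succ_le_succ (Nat.div_le_div_right (by omega))
  have hJa0 : (0:ℝ) < clsJ p m a := by
    have := lo a ha
    have : 0 < clsJ p m a := by omega
    exact_mod_cast this
  have hJb0 : (0:ℝ) < clsJ p m b := by
    have := lo b hb
    have : 0 < clsJ p m b := by omega
    exact_mod_cast this
  have hJa2 : ((p / m + 1 : ℕ) : ℝ) ≤ 2 * clsJ p m a := by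
    have := lo a ha
    have : p / m + 1 ≤ 2 * clsJ p m a := by omega
    exact_mod_cast this
  have hJb2 : ((p / m + 1 : ℕ) : ℝ) ≤ 2 * clsJ p m b := by
    have := lo b hb
    have : p / m + 1 ≤ 2 * clsJ p m b := by omega
    exact_mod_cast this
  have hcardR : ((condEvent p m x a).card : ℝ) = clsJ p m a * p := by
    rw [hcard]; push_cast; rfl
  have hmean : abs ((k : ℝ) * ((clsJ p m b : ℝ) / p) - (k : ℝ) / m) ≤ 2305 := by
    have r1 : (p : ℝ) ≤ m * clsJ p m b + m := by
      have h1 := lo b hb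
      have h2 := Nat.div_add_mod p m
      have h3 := Nat.mod_lt p (show m > 0 by omega)
      have h4 := Nat.mul_le_mul_left m h1
      have : p ≤ m * clsJ p m b + m := by omega
      exact_mod_cast this
    have r2 : (m : ℝ) * clsJ p m b ≤ p + m := by
      have h1 := hi b hb
      have h2 := Nat.div_add_mod p m
      have h4 := Nat.mul_le_mul_left m h1
      rw [mul_add] at h4
      have : m * clsJ p m b ≤ p + m := by omega
      exact_mod_cast this
    have e : (k : ℝ) * ((clsJ p m b : ℝ) / p) - (k : ℝ) / m = (k / p) * ((m * clsJ p m b - p) / m) := by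
      field_simp
    rw [e, abs_mul]
    have a1 : |(k:ℝ) / p| ≤ 1 := by
      rw [abs_of_pos (by positivity), div_le_one hp0]
      have : k ≤ p := by omega
      exact_mod_cast this
    have a2 : |((m : ℝ) * clsJ p m b - p) / m| ≤ 1 := by
      rw [abs_div, abs_of_pos hm0, div_le_one hm0, abs_le]
      constructor <;> linarith
    have := mul_le_mul a1 a2 (abs_nonneg _) (by norm_num)
    linarith
  refine ⟨by rw [hexp]; exact hmean, ?_, ?_⟩
  · rw [hcs, hcardR]
    have : (k : ℝ) * ((clsJ p m a : ℝ) * clsJ p m b) / (clsJ p m a * p)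
        = (k : ℝ) * ((clsJ p m b : ℝ) / p) := by field_simp
    rw [this]
    exact hmean
  · intro lam hlam
    set μ := expLoad p m b X with hμ
    have hμ0 : 0 < μ := by rw [hexp]; positivity
    set L : ℝ := U * Real.logb 2 U with hL
    have hLU : (U : ℝ) ≤ L := by
      have hU' : (2:ℝ) ≤ U := by exact_mod_cast hU2
      have l1 : 1 ≤ Real.logb 2 U := by
        rw [Real.le_logb_iff_rpow_le (by norm_num) (by linarith)]
        simpa using hU'
      rw [hL]; nlinarith
    have hkL : (k : ℝ) ≤ L := le_trans (by exact_mod_cast hkU) hLU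
    set S := (condEvent p m x a).filter fun στ =>
            lam * Real.sqrt μ ≤ abs ((bucketLoad p m b X στ : ℝ) - μ) with hS
    have cheb : (S.card : ℝ) * (lam ^ 2 * μ) ≤
        ∑ w ∈ condEvent p m x a, ((bucketLoad p m b X w : ℝ) - μ) ^ 2 := by
      have h1 : ∑ w ∈ S, ((bucketLoad p m b X w : ℝ) - μ) ^ 2 ≤
          ∑ w ∈ condEvent p m x a, ((bucketLoad p m b X w : ℝ) - μ) ^ 2 :=
        Finset.sum_le_sum_of_subset_of_nonneg (Finset.filter_subset _ _) (fun _ _ _ => sq_nonneg _)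
      refine le_trans ?_ h1
      rw [← nsmul_eq_mul]
      refine Finset.card_nsmul_le_sum _ _ _ fun w hw => ?_
      have h2 := (Finset.mem_filter.mp hw).2
      have h3 := pow_le_pow_left₀ (by positivity) h2 2
      rw [mul_pow, Real.sq_sqrt hμ0.le, sq_abs] at h3
      exact h3
    have var : ∑ w ∈ condEvent p m x a, ((bucketLoad p m b X w : ℝ) - μ) ^ 2 ≤
        k * ((clsJ p m a : ℝ) * clsJ p m b) + 36 * ((p / m + 1 : ℕ) : ℝ) ^ 2 * (16 * L) := by
      have e : ∑ w ∈ condEvent p m x a, ((bucketLoad p m b X w : ℝ) - μ) ^ 2 =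
          ∑ w ∈ condEvent p m x a, (bucketLoad p m b X w : ℝ) ^ 2
          - 2 * μ * ∑ w ∈ condEvent p m x a, (bucketLoad p m b X w : ℝ)
          + (condEvent p m x a).card * μ ^ 2 := by
        rw [Finset.mul_sum, ← Finset.sum_sub_distrib, ← nsmul_eq_mul, ← Finset.sum_const,
          ← Finset.sum_add_distrib]
        refine Finset.sum_congr rfl fun w _ => ?_
        ring
      have e' : 2 * μ * (k * ((clsJ p m a : ℝ) * clsJ p m b)) - clsJ p m a * p * μ ^ 2
          = (k : ℝ) ^ 2 * ((clsJ p m a : ℝ) * clsJ p m b * clsJ p m b / p) := by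
        rw [hexp]; field_simp; ring
      rw [e, hcs, hcardR]
      linarith
    have hJJ : ((p / m + 1 : ℕ) : ℝ) ^ 2 ≤ 4 * ((clsJ p m a : ℝ) * clsJ p m b) := by
      have := mul_le_mul hJa2 hJb2 (by positivity) (by positivity)
      nlinarith
    have main : (S.card : ℝ) * (lam ^ 2 * μ) ≤ ((clsJ p m a : ℝ) * clsJ p m b) * (2305 * L) := by
      have hL0 : 0 ≤ L := le_trans (by positivity) hLU
      have h1 := mul_le_mul_of_nonneg_right hJJ hL0
      have h2 := mul_le_mul_of_nonneg_right hkL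
        (by positivity : 0 ≤ (clsJ p m a : ℝ) * clsJ p m b)
      nlinarith
    rw [hcardR, mul_assoc, ← hL, div_le_div_iff₀ (by positivity) (by positivity)]
    have e : (S.card : ℝ) * (lam ^ 2 * μ) = (S.card : ℝ) * (lam ^ 2 * k) * (clsJ p m b / p) := by
      rw [hexp]; ring
    rw [e, mul_div_assoc', div_le_iff₀ hp0] at main
    have : (S.card : ℝ) * (lam ^ 2 * k) * clsJ p m b ≤ (2305 * L * (clsJ p m a * p)) * clsJ p m b := by
      linarith
    exact le_of_mul_le_mul_right this hJb0
end
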